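/- Let R be a ring such that Ext^3_R(X,Y) = 0 for all left R-modules X and Y, and such that Ext^2_R(I,P) = 0 for every injective left R-module I and every projective left R-module P. Then Ext^2_R(X,Y) = 0 for all left R-modules X and Y. (This is the argument showing that for a tilted algebra B, which has global dimension at most 2, the vanishing of Ext^2_B(DB,B) implies the vanishing of Ext^2_B(X,Y) for all B-modules X, Y.) -/

import Mathlib

open CategoryTheory

universe u

/-- The `n`-th Ext group `Ext^n_R(X, Y)` of two `R`-modules, computed in the abelian
category of (left) `R`-modules. -/
noncomputable abbrev ExtGroup (R : Type u) [Ring R] (X Y : ModuleCat.{u} R) (n : ℕ) :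
    ModuleCat ℤ :=
  ((Ext ℤ (ModuleCat.{u} R) n).obj (Opposite.op X)).obj Y

lemma extGroup_subsingleton_iff (R : Type u) [Ring R] (X Y : ModuleCat.{u} R) (n : ℕ) :
    Subsingleton (ExtGroup R X Y (n + 1)) ↔ Subsingleton (Abelian.Ext X Y (n + 1)) := by
  let P := projectiveResolution X
  have hA : Subsingleton (ExtGroup R X Y (n + 1)) ↔
      ∀ f : P.complex.X (n + 1) ⟶ Y, P.complex.d (n + 2) (n + 1) ≫ f = 0 →
        ∃ g : P.complex.X n ⟶ Y, P.complex.d (n + 1) n ≫ g = f := by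
    rw [← ModuleCat.isZero_iff_subsingleton, (P.isoExt (R := ℤ) (n + 1) Y).isZero_iff,
      ← HomologicalComplex.exactAt_iff_isZero_homology,
      HomologicalComplex.exactAt_iff' _ n (n + 1) (n + 2) (by simp) (by simp),
      ShortComplex.moduleCat_exact_iff]
    exact Iff.rfl
  rw [hA]
  constructor
  · intro h
    refine ⟨fun a b => ?_⟩
    have key : ∀ a : Abelian.Ext X Y (n + 1), a = 0 := by
      intro a
      obtain ⟨f, hf, rfl⟩ := P.extMk_surjective a (n + 2) rfl
      exact (P.extMk_eq_zero_iff f (n + 2) rfl hf n rfl).2 (h f hf)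
    rw [key a, key b]
  · intro h f hf
    exact (P.extMk_eq_zero_iff f (n + 2) rfl hf n rfl).1 (Subsingleton.elim _ _)

/-- If `Ext^3_R(X, Y) = 0` for all left `R`-modules `X`, `Y`, and `Ext^2_R(I, P) = 0`
for every injective `I` and every projective `P`, then `Ext^2_R(X, Y) = 0` for all
left `R`-modules `X`, `Y`. -/
theorem ext_two_vanishes (R : Type u) [Ring R]
    (h3 : ∀ X Y : ModuleCat.{u} R, Subsingleton (ExtGroup R X Y 3))
    (h2 : ∀ I P : ModuleCat.{u} R, Injective I → Projective P →
      Subsingleton (ExtGroup R I P 2)) :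
    ∀ X Y : ModuleCat.{u} R, Subsingleton (ExtGroup R X Y 2) := by
  replace h3 := fun X Y => (extGroup_subsingleton_iff R X Y 2).1 (h3 X Y)
  replace h2 := fun I P hI hP => (extGroup_subsingleton_iff R I P 1).1 (h2 I P hI hP)
  have hXP : ∀ X P : ModuleCat.{u} R, Projective P → ∀ a : Abelian.Ext X P 2, a = 0 := by
    intro X P hP a
    have hS : (ShortComplex.mk (Injective.ι X) (Limits.cokernel.π (Injective.ι X))
        (Limits.cokernel.condition _)).ShortExact :=
      { exact := ShortComplex.exact_cokernel _ }
    have := h3 (Limits.cokernel (Injective.ι X)) P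
    have := h2 (Injective.under X) P inferInstance hP
    obtain ⟨b, rfl⟩ := Abelian.Ext.contravariant_sequence_exact₁ hS P a (n₁ := 3) rfl
      (Subsingleton.elim _ _)
    rw [Subsingleton.elim b 0, Abelian.Ext.comp_zero]
  intro X Y
  refine (extGroup_subsingleton_iff R X Y 1).2 ?_
  have key : ∀ a : Abelian.Ext X Y 2, a = 0 := by
    intro a
    have hS : (ShortComplex.mk (Limits.kernel.ι (Projective.π Y)) (Projective.π Y)
        (Limits.kernel.condition _)).ShortExact :=
      { exact := ShortComplex.exact_kernel _ }
    have := h3 X (Limits.kernel (Projective.π Y))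
    obtain ⟨b, rfl⟩ := Abelian.Ext.covariant_sequence_exact₃ X hS a (n₁ := 3) rfl
      (Subsingleton.elim _ _)
    rw [hXP X _ inferInstance b, Abelian.Ext.zero_comp]
  exact ⟨fun a b => by rw [key a, key b]⟩
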